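/- arXiv:2006.01498 — 6 statements merged into one kernel-verified Lean document; each statement's English description precedes it below -/
import Mathlib

section
/- Propagation of the algebraic symmetries (Lemma 2.6): suppose K_ij, Γ_ijb, f_i^j and additional smooth functions f^b_j : ℝ⁴ → ℝ satisfy the equations (E-K), (E-Γ), (E-f) and (E-f⁻¹) at every point of ℝ⁴. If at t = 0, for all x ∈ ℝ³ and all indices, K_ij = K_ji, Γ_ijb = −Γ_ibj, Σ_j f_i^j f^b_j = δ_i^b and Σ_b f^b_j f_b^i = δ_j^i, then these four families of identities hold at every point of ℝ⁴. -/
open scoped BigOperators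

noncomputable section

/-- Points of `ℝ⁴ = ℝ_t × ℝ³`; coordinate `0` is time. -/
abbrev Pt : Type := Fin 4 → ℝ

/-- Coordinate partial derivative `∂_μ u`. -/
def pd (μ : Fin 4) (u : Pt → ℝ) (p : Pt) : ℝ := fderiv ℝ u p (Pi.single μ 1)

/-- Frame derivative `e_i u = Σ_j f_i^j ∂_j u` along the spatial frame `f`. -/
def fr (f : Fin 3 → Fin 3 → Pt → ℝ) (i : Fin 3) (u : Pt → ℝ) (p : Pt) : ℝ :=
  ∑ j : Fin 3, f i j p * pd j.succ u p

/-- `tr K = Σ_c K_cc`. -/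
def trK (K : Fin 3 → Fin 3 → Pt → ℝ) (p : Pt) : ℝ := ∑ c : Fin 3, K c c p

/-- `|K|² = Σ_{i,j} (K_ij)²`. -/
def nK2 (K : Fin 3 → Fin 3 → Pt → ℝ) (p : Pt) : ℝ :=
  ∑ i : Fin 3, ∑ j : Fin 3, (K i j p) ^ 2

/-- `|Γ|² = Σ_{i,j,b} (Γ_ijb)²`. -/
def nG2 (G : Fin 3 → Fin 3 → Fin 3 → Pt → ℝ) (p : Pt) : ℝ :=
  ∑ i : Fin 3, ∑ j : Fin 3, ∑ b : Fin 3, (G i j b p) ^ 2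

/-- Kronecker delta. -/
def kd (i j : Fin 3) : ℝ := if i = j then 1 else 0

/-- The modified evolution equation (E-K) for `K_ij` at the point `p`. -/
def EK (f K : Fin 3 → Fin 3 → Pt → ℝ) (G : Fin 3 → Fin 3 → Fin 3 → Pt → ℝ)
    (i j : Fin 3) (p : Pt) : Prop :=
  pd 0 (K i j) p + trK K p * K i j p =
    (1 / 2) * ( fr f i (fun q => ∑ b : Fin 3, G b j b q) p
      - (∑ b : Fin 3, fr f b (G i j b) p)
      + (∑ b : Fin 3, ∑ c : Fin 3, G b i c p * G c j b p)
      + (∑ b : Fin 3, ∑ c : Fin 3, G b b c p * G i j c p)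
      + fr f j (fun q => ∑ b : Fin 3, G b i b q) p
      - (∑ b : Fin 3, fr f b (G j i b) p)
      + (∑ b : Fin 3, ∑ c : Fin 3, G b j c p * G c i b p)
      + (∑ b : Fin 3, ∑ c : Fin 3, G b b c p * G j i c p) )
    - (1 / 2) * kd i j *
      ( 2 * (∑ a : Fin 3, fr f a (fun q => ∑ b : Fin 3, G b a b q) p)
      + (∑ b : Fin 3, ∑ a : Fin 3, ∑ c : Fin 3, G b a c p * G c a b p)
      + (∑ c : Fin 3, (∑ b : Fin 3, G b b c p) * (∑ a : Fin 3, G a a c p))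
      + nK2 K p - (trK K p) ^ 2 )

/-- The unmodified evolution equation (E-K₀) for `K_ij` at the point `p`. -/
def EK0 (f K : Fin 3 → Fin 3 → Pt → ℝ) (G : Fin 3 → Fin 3 → Fin 3 → Pt → ℝ)
    (i j : Fin 3) (p : Pt) : Prop :=
  pd 0 (K i j) p + trK K p * K i j p =
    (1 / 2) * ( fr f i (fun q => ∑ b : Fin 3, G b j b q) p
      - (∑ b : Fin 3, fr f b (G i j b) p)
      + (∑ b : Fin 3, ∑ c : Fin 3, G b i c p * G c j b p)
      + (∑ b : Fin 3, ∑ c : Fin 3, G b b c p * G i j c p)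
      + fr f j (fun q => ∑ b : Fin 3, G b i b q) p
      - (∑ b : Fin 3, fr f b (G j i b) p)
      + (∑ b : Fin 3, ∑ c : Fin 3, G b j c p * G c i b p)
      + (∑ b : Fin 3, ∑ c : Fin 3, G b b c p * G j i c p) )

/-- The modified evolution equation (E-Γ) for `Γ_ijb` at the point `p`. -/
def EG (f K : Fin 3 → Fin 3 → Pt → ℝ) (G : Fin 3 → Fin 3 → Fin 3 → Pt → ℝ)
    (i j b : Fin 3) (p : Pt) : Prop :=
  pd 0 (G i j b) p + (∑ c : Fin 3, K i c p * G c j b p) =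
    fr f j (K b i) p - fr f b (K j i) p
    - (∑ c : Fin 3, G j b c p * K c i p) - (∑ c : Fin 3, G j i c p * K b c p)
    + (∑ c : Fin 3, G b j c p * K c i p) + (∑ c : Fin 3, G b i c p * K j c p)
    + kd i b * ( (∑ c : Fin 3, fr f c (K c j) p)
      - (∑ c : Fin 3, ∑ l : Fin 3, G c c l p * K l j p)
      - (∑ c : Fin 3, ∑ l : Fin 3, G c j l p * K c l p)
      - fr f j (trK K) p )
    - kd i j * ( (∑ c : Fin 3, fr f c (K c b) p)
      - (∑ c : Fin 3, ∑ l : Fin 3, G c c l p * K l b p)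
      - (∑ c : Fin 3, ∑ l : Fin 3, G c b l p * K c l p)
      - fr f b (trK K) p )

/-- The unmodified evolution equation (E-Γ₀) for `Γ_ijb` at the point `p`. -/
def EG0 (f K : Fin 3 → Fin 3 → Pt → ℝ) (G : Fin 3 → Fin 3 → Fin 3 → Pt → ℝ)
    (i j b : Fin 3) (p : Pt) : Prop :=
  pd 0 (G i j b) p + (∑ c : Fin 3, K i c p * G c j b p) =
    fr f j (K b i) p - fr f b (K j i) p
    - (∑ c : Fin 3, G j b c p * K c i p) - (∑ c : Fin 3, G j i c p * K b c p)
    + (∑ c : Fin 3, G b j c p * K c i p) + (∑ c : Fin 3, G b i c p * K j c p)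

/-- The frame evolution equation (E-f) at every point. -/
def Ef (f K : Fin 3 → Fin 3 → Pt → ℝ) : Prop :=
  ∀ (i j : Fin 3) (p : Pt), pd 0 (f i j) p + (∑ c : Fin 3, K i c p * f c j p) = 0

/-- The inverse frame evolution equation (E-f⁻¹) at every point. -/
def Efi (fi K : Fin 3 → Fin 3 → Pt → ℝ) : Prop :=
  ∀ (b j : Fin 3) (p : Pt), pd 0 (fi b j) p - (∑ c : Fin 3, K c b p * fi c j p) = 0

/-- Torsion components `C_ijb = Σ_l f^b_l (e_i f_j^l − e_j f_i^l) − Γ_ijb + Γ_jib`. -/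
def Tor (f fi : Fin 3 → Fin 3 → Pt → ℝ) (G : Fin 3 → Fin 3 → Fin 3 → Pt → ℝ)
    (i j b : Fin 3) (p : Pt) : ℝ :=
  (∑ l : Fin 3, fi b l p * (fr f i (f j l) p - fr f j (f i l) p)) - G i j b p + G j i b p

/-- Spatial covariant derivative `D̃_j K_bi = e_j K_bi − Σ_l Γ_jbl K_li − Σ_l Γ_jil K_bl`. -/
def DtK (f K : Fin 3 → Fin 3 → Pt → ℝ) (G : Fin 3 → Fin 3 → Fin 3 → Pt → ℝ)
    (j b i : Fin 3) (p : Pt) : ℝ :=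
  fr f j (K b i) p - (∑ l : Fin 3, G j b l p * K l i p) - (∑ l : Fin 3, G j i l p * K b l p)

/-- `R̂_b0 = Σ_i D̃_i K_bi − e_b (tr K)`. -/
def Rb0 (f K : Fin 3 → Fin 3 → Pt → ℝ) (G : Fin 3 → Fin 3 → Fin 3 → Pt → ℝ)
    (b : Fin 3) (p : Pt) : ℝ :=
  (∑ i : Fin 3, DtK f K G i b i p) - fr f b (trK K) p

/-- Modified spatial curvature `R̂_aijb`. -/
def Rhat (f : Fin 3 → Fin 3 → Pt → ℝ) (G : Fin 3 → Fin 3 → Fin 3 → Pt → ℝ)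
    (a i j b : Fin 3) (p : Pt) : ℝ :=
  fr f a (G i j b) p - fr f i (G a j b) p
  - (∑ c : Fin 3, G a b c p * G i j c p)
  + (∑ c : Fin 3, G i b c p * G a j c p)
  - (∑ c : Fin 3, (G a i c p - G i a c p) * G c j b p)

/-- Modified spatial Ricci contraction `r̂_ij = Σ_b R̂_bijb`. -/
def rhat (f : Fin 3 → Fin 3 → Pt → ℝ) (G : Fin 3 → Fin 3 → Fin 3 → Pt → ℝ)
    (i j : Fin 3) (p : Pt) : ℝ :=
  ∑ b : Fin 3, Rhat f G b i j b p

/-- Spatial covariant derivative of the torsion, `D̃_j C_aib`. -/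
def DtC (f fi : Fin 3 → Fin 3 → Pt → ℝ) (G : Fin 3 → Fin 3 → Fin 3 → Pt → ℝ)
    (j a i b : Fin 3) (p : Pt) : ℝ :=
  fr f j (Tor f fi G a i b) p
  - (∑ l : Fin 3, G j a l p * Tor f fi G l i b p)
  - (∑ l : Fin 3, G j i l p * Tor f fi G a l b p)
  - (∑ l : Fin 3, G j b l p * Tor f fi G a i l p)

/-- Uniqueness of the zero solution of a linear homogeneous system of ODEs. -/
theorem lin_ode_zero {ι : Type} [Fintype ι] (a : ι → ι → ℝ → ℝ) (u : ι → ℝ → ℝ)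
    (ha : ∀ k l, Continuous (a k l))
    (hu : ∀ k t, HasDerivAt (u k) (∑ l, a k l t * u l t) t)
    (h0 : ∀ k, u k 0 = 0) (k : ι) (t : ℝ) : u k t = 0 := by
  obtain ⟨C, hC⟩ : ∃ C : ℝ, ∀ s ∈ Set.Icc (-(|t| + 1)) (|t| + 1), ∀ k, ∑ l, |a k l s| ≤ C := by
    have hc : Continuous (fun s => ∑ k, ∑ l, |a k l s|) := by fun_prop
    obtain ⟨C, hC⟩ := (isCompact_Icc (a := -(|t| + 1)) (b := |t| + 1)).bddAbove_image
      hc.continuousOn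
    refine ⟨C, fun s hs k => le_trans ?_ (hC ⟨s, hs, rfl⟩)⟩
    exact Finset.single_le_sum (f := fun k => ∑ l, |a k l s|)
      (fun k _ => Finset.sum_nonneg fun l _ => abs_nonneg _) (Finset.mem_univ k)
  have hC0 : (0 : ℝ) ≤ max C 0 := le_max_right _ _
  have key := ODE_solution_unique_of_mem_Icc (E := ι → ℝ)
    (v := fun s x k => ∑ l, a k l s * x l) (s := fun _ => Set.univ)
    (K := ⟨max C 0, hC0⟩) (f := fun s k => u k s) (g := fun _ => 0)
    (a := -(|t| + 1)) (b := |t| + 1) (t₀ := 0) ?_ ?_ ?_ ?_ ?_ ?_ ?_ ?_ ?_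
  · have := key (x := t) ⟨by linarith [neg_abs_le t], by linarith [le_abs_self t]⟩
    exact congrFun this k
  · intro s hs
    refine LipschitzOnWith.of_dist_le_mul fun x _ y _ => ?_
    refine (dist_pi_le_iff (by positivity)).2 fun k => ?_
    rw [Real.dist_eq, ← Finset.sum_sub_distrib]
    refine (Finset.abs_sum_le_sum_abs _ _).trans ?_
    calc ∑ l, |a k l s * x l - a k l s * y l| ≤ ∑ l, |a k l s| * dist x y := by
          refine Finset.sum_le_sum fun l _ => ?_
          rw [← mul_sub, abs_mul]
          refine mul_le_mul_of_nonneg_left ?_ (abs_nonneg _)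
          rw [← Real.dist_eq]
          exact dist_le_pi_dist x y l
      _ = (∑ l, |a k l s|) * dist x y := by rw [Finset.sum_mul]
      _ ≤ max C 0 * dist x y := by
          refine mul_le_mul_of_nonneg_right ?_ dist_nonneg
          exact (hC s ⟨hs.1.le, hs.2.le⟩ k).trans (le_max_left _ _)
  · constructor <;> linarith [abs_nonneg t]
  · exact (continuous_pi fun k => continuous_iff_continuousAt.2
      fun s => (hu k s).continuousAt).continuousOn
  · exact fun s _ => hasDerivAt_pi.2 fun k => hu k s
  · simp
  · exact continuousOn_const
  · intro s _
    have := hasDerivAt_const s (0 : ι → ℝ)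
    convert this using 1
    ext k
    simp
  · simp
  · ext k
    simpa using h0 k

theorem pd_line {u : Pt → ℝ} (hu : ContDiff ℝ (⊤ : ℕ∞) u) (p : Pt) (t : ℝ) :
    HasDerivAt (fun s => u (Function.update p 0 s)) (pd 0 u (Function.update p 0 t)) t := by
  have h1 : HasFDerivAt u (fderiv ℝ u (Function.update p 0 t)) (Function.update p 0 t) :=
    (hu.differentiable (by simp) _).hasFDerivAt
  exact h1.comp_hasDerivAt t (hasDerivAt_update p 0 t)

theorem line_cont {u : Pt → ℝ} (hu : ContDiff ℝ (⊤ : ℕ∞) u) (p : Pt) :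
    Continuous (fun s : ℝ => u (Function.update p 0 s)) :=
  hu.continuous.comp (continuous_const.update 0 continuous_id)

theorem kd_comm (i j : Fin 3) : kd i j = kd j i := by
  simp [kd, eq_comm]

/-- Lemma 2.6: propagation of the algebraic symmetries by the
modified reduced system. -/
theorem propagation_of_symmetries
    (f fi K : Fin 3 → Fin 3 → Pt → ℝ) (G : Fin 3 → Fin 3 → Fin 3 → Pt → ℝ)
    (hf : ∀ i j, ContDiff ℝ (⊤ : ℕ∞) (f i j)) (hfi : ∀ i j, ContDiff ℝ (⊤ : ℕ∞) (fi i j))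
    (hK : ∀ i j, ContDiff ℝ (⊤ : ℕ∞) (K i j)) (hG : ∀ i j b, ContDiff ℝ (⊤ : ℕ∞) (G i j b))
    (hEK : ∀ (i j : Fin 3) (p : Pt), EK f K G i j p)
    (hEG : ∀ (i j b : Fin 3) (p : Pt), EG f K G i j b p)
    (hEf : Ef f K) (hEfi : Efi fi K)
    (h0K : ∀ p : Pt, p 0 = 0 → ∀ i j : Fin 3, K i j p = K j i p)
    (h0G : ∀ p : Pt, p 0 = 0 → ∀ i j b : Fin 3, G i j b p = - G i b j p)
    (h0inv1 : ∀ p : Pt, p 0 = 0 → ∀ i b : Fin 3, (∑ j : Fin 3, f i j p * fi b j p) = kd i b)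
    (h0inv2 : ∀ p : Pt, p 0 = 0 → ∀ j i : Fin 3, (∑ b : Fin 3, fi b j p * f b i p) = kd j i) :
    (∀ (p : Pt) (i j : Fin 3), K i j p = K j i p) ∧
    (∀ (p : Pt) (i j b : Fin 3), G i j b p = - G i b j p) ∧
    (∀ (p : Pt) (i b : Fin 3), (∑ j : Fin 3, f i j p * fi b j p) = kd i b) ∧
    (∀ (p : Pt) (j i : Fin 3), (∑ b : Fin 3, fi b j p * f b i p) = kd j i) := by
  have hK' : ∀ (p : Pt) (i j : Fin 3), K i j p = K j i p := by
    intro p i j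
    have := lin_ode_zero (ι := Unit) (fun _ _ t => - trK K (Function.update p 0 t))
      (fun _ t => K i j (Function.update p 0 t) - K j i (Function.update p 0 t))
      (fun _ _ => by
        unfold trK
        exact (continuous_finsetSum _ fun c _ => line_cont (hK c c) p).neg)
      (fun _ t => by
        refine ((pd_line (hK i j) p t).sub (pd_line (hK j i) p t)).congr_deriv ?_
        have e1 := hEK i j (Function.update p 0 t)
        have e2 := hEK j i (Function.update p 0 t)
        unfold EK at e1 e2
        rw [kd_comm j i] at e2
        simp only [Finset.univ_unique, Finset.sum_singleton]
        linarith)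
      (fun _ => sub_eq_zero.2 (h0K _ (by simp) i j)) () (p 0)
    simpa [sub_eq_zero] using this
  have hG' : ∀ (p : Pt) (i j b : Fin 3), G i j b p = - G i b j p := by
    intro p i j b
    have := lin_ode_zero (ι := Fin 3) (fun i c t => - K i c (Function.update p 0 t))
      (fun i t => G i j b (Function.update p 0 t) + G i b j (Function.update p 0 t))
      (fun i c => (line_cont (hK i c) p).neg)
      (fun i t => by
        refine ((pd_line (hG i j b) p t).add (pd_line (hG i b j) p t)).congr_deriv ?_
        have e1 := hEG i j b (Function.update p 0 t)
        have e2 := hEG i b j (Function.update p 0 t)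
        unfold EG at e1 e2
        have e3 : ∑ c, -K i c (Function.update p 0 t) *
            (G c j b (Function.update p 0 t) + G c b j (Function.update p 0 t))
            = - (∑ c, K i c (Function.update p 0 t) * G c j b (Function.update p 0 t))
              - (∑ c, K i c (Function.update p 0 t) * G c b j (Function.update p 0 t)) := by
          simp only [Fin.sum_univ_three]
          ring
        rw [e3]
        linarith)
      (fun i => by
        have := h0G (Function.update p 0 0) (by simp) i j b
        simp [this]) i (p 0)
    simp only [Function.update_eq_self] at this
    linarith
  have hH : ∀ (p : Pt) (j i : Fin 3), (∑ b : Fin 3, fi b j p * f b i p) = kd j i := by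
    intro p j i
    have := lin_ode_zero (ι := Unit) (fun _ _ _ => 0)
      (fun _ t => (∑ b : Fin 3, fi b j (Function.update p 0 t) * f b i (Function.update p 0 t))
        - kd j i)
      (fun _ _ => continuous_const)
      (fun _ t => by
        refine ((HasDerivAt.fun_sum fun b _ => (pd_line (hfi b j) p t).mul
          (pd_line (hf b i) p t)).sub_const _).congr_deriv ?_
        have e1 := fun b => eq_neg_of_add_eq_zero_left (hEf b i (Function.update p 0 t))
        have e2 := fun b => sub_eq_zero.1 (hEfi b j (Function.update p 0 t))
        simp only [e1, e2, Fin.sum_univ_three]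
        simp
        ring)
      (fun _ => sub_eq_zero.2 (h0inv2 _ (by simp) j i)) () (p 0)
    simpa [sub_eq_zero] using this
  refine ⟨hK', hG', ?_, hH⟩
  intro p i b
  have h1 : (Matrix.of fun j b => fi b j p) * (Matrix.of fun b i => f b i p) = 1 := by
    ext j i
    simpa [Matrix.mul_apply, Matrix.one_apply, kd] using hH p j i
  have h3 := mul_eq_one_comm.1 h1
  have h2 := congrArg (fun M : Matrix (Fin 3) (Fin 3) ℝ => M i b) h3
  simpa [Matrix.mul_apply, Matrix.one_apply, kd] using h2
end
end

section
/- Symmetric-hyperbolic structure of the linearized modified ADM system (Lemma 2.7): let K_ij, Γ_ijb : ℝ⁴ → ℝ be smooth with K_ij = K_ji and Γ_ijb = −Γ_ibj everywhere, satisfying the linear constant-coefficient system ∂_t K_ij = ½[ ∂_i Γ_bjb − ∂_b Γ_ijb + ∂_j Γ_bib − ∂_b Γ_jib ] − δ_ij ∂_a Γ_bab and ∂_t Γ_ijb = ∂_j K_bi − ∂_b K_ji + δ_ib ( ∂_c K_cj − ∂_j (tr K) ) − δ_ij ( ∂_c K_cb − ∂_b (tr K) ) at every point of ℝ⁴. Then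 the energy identity ∂_t ( ½|K|² + ¼|Γ|² ) = Σ_k ∂_k F_k holds at every point, where F_k := Σ_{i,b} K_ik Γ_bib − (tr K) Σ_b Γ_bkb − Σ_{i,j} Γ_ijk K_ji. -/
open scoped BigOperators

noncomputable section

theorem pd_sum3 (μ : Fin 4) (u : Fin 3 → Pt → ℝ) (p : Pt)
    (h : ∀ i, Differentiable ℝ (u i)) :
    pd μ (fun q => ∑ i : Fin 3, u i q) p = ∑ i : Fin 3, pd μ (u i) p := by
  unfold pd
  rw [fderiv_fun_sum (fun i _ => (h i) p)]
  simp

theorem pd_mul' (μ : Fin 4) (u v : Pt → ℝ) (p : Pt)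
    (hu : Differentiable ℝ u) (hv : Differentiable ℝ v) :
    pd μ (fun q => u q * v q) p = pd μ u p * v p + u p * pd μ v p := by
  unfold pd
  rw [fderiv_fun_mul (hu p) (hv p)]
  simp
  ring

theorem pd_sub' (μ : Fin 4) (u v : Pt → ℝ) (p : Pt)
    (hu : Differentiable ℝ u) (hv : Differentiable ℝ v) :
    pd μ (fun q => u q - v q) p = pd μ u p - pd μ v p := by
  unfold pd
  rw [fderiv_fun_sub (hu p) (hv p)]
  simp

theorem pd_add' (μ : Fin 4) (u v : Pt → ℝ) (p : Pt)
    (hu : Differentiable ℝ u) (hv : Differentiable ℝ v) :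
    pd μ (fun q => u q + v q) p = pd μ u p + pd μ v p := by
  unfold pd
  rw [fderiv_fun_add (hu p) (hv p)]
  simp

theorem pd_cmul (μ : Fin 4) (c : ℝ) (u : Pt → ℝ) (p : Pt)
    (hu : Differentiable ℝ u) :
    pd μ (fun q => c * u q) p = c * pd μ u p := by
  unfold pd
  rw [fderiv_const_mul (hu p)]
  simp

theorem pd_sq (μ : Fin 4) (u : Pt → ℝ) (p : Pt)
    (hu : Differentiable ℝ u) :
    pd μ (fun q => u q ^ 2) p = 2 * u p * pd μ u p := by
  have : (fun q => u q ^ 2) = fun q => u q * u q := by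
    funext q
    ring
  rw [this, pd_mul' μ u u p hu hu]
  ring

/-- Lemma 2.7: energy identity for the linearized modified ADM system. -/
theorem linearized_energy_identity
    (K : Fin 3 → Fin 3 → Pt → ℝ) (G : Fin 3 → Fin 3 → Fin 3 → Pt → ℝ)
    (hK : ∀ i j, ContDiff ℝ (⊤ : ℕ∞) (K i j)) (hG : ∀ i j b, ContDiff ℝ (⊤ : ℕ∞) (G i j b))
    (hKsym : ∀ (i j : Fin 3) (p : Pt), K i j p = K j i p)
    (hGanti : ∀ (i j b : Fin 3) (p : Pt), G i j b p = - G i b j p)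
    (heqK : ∀ (i j : Fin 3) (p : Pt), pd 0 (K i j) p =
      (1 / 2) * ( pd i.succ (fun q => ∑ b : Fin 3, G b j b q) p
        - (∑ b : Fin 3, pd b.succ (G i j b) p)
        + pd j.succ (fun q => ∑ b : Fin 3, G b i b q) p
        - (∑ b : Fin 3, pd b.succ (G j i b) p) )
      - kd i j * (∑ a : Fin 3, pd a.succ (fun q => ∑ b : Fin 3, G b a b q) p))
    (heqG : ∀ (i j b : Fin 3) (p : Pt), pd 0 (G i j b) p =
      pd j.succ (K b i) p - pd b.succ (K j i) p
      + kd i b * ((∑ c : Fin 3, pd c.succ (K c j) p) - pd j.succ (trK K) p)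
      - kd i j * ((∑ c : Fin 3, pd c.succ (K c b) p) - pd b.succ (trK K) p)) :
    ∀ p : Pt,
      pd 0 (fun q => (1 / 2) * nK2 K q + (1 / 4) * nG2 G q) p
        = ∑ k : Fin 3, pd k.succ
            (fun q => (∑ i : Fin 3, K i k q * (∑ b : Fin 3, G b i b q))
              - trK K q * (∑ b : Fin 3, G b k b q)
              - (∑ i : Fin 3, ∑ j : Fin 3, G i j k q * K j i q)) p := by
  intro p
  have dK : ∀ i j, Differentiable ℝ (K i j) := fun i j => (hK i j).differentiable (by simp)
  have dG : ∀ i j b, Differentiable ℝ (G i j b) :=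
    fun i j b => (hG i j b).differentiable (by simp)
  have hT : ∀ μ : Fin 4, pd μ (trK K) p = ∑ c : Fin 3, pd μ (K c c) p := fun μ =>
    pd_sum3 μ (fun c => K c c) p (fun c => dK c c)
  have dT : Differentiable ℝ (trK K) := by
    unfold trK
    fun_prop
  have hS : ∀ (μ : Fin 4) (j : Fin 3), pd μ (fun q => ∑ b : Fin 3, G b j b q) p
      = ∑ b : Fin 3, pd μ (G b j b) p := fun μ j =>
    pd_sum3 μ (fun b => G b j b) p (fun b => dG b j b)
  have dS : ∀ j : Fin 3, Differentiable ℝ (fun q => ∑ b : Fin 3, G b j b q) := by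
    intro j
    fun_prop
  have hL : pd 0 (fun q => (1 / 2) * nK2 K q + (1 / 4) * nG2 G q) p
      = (∑ i : Fin 3, ∑ j : Fin 3, K i j p * pd 0 (K i j) p)
        + (1 / 2) * ∑ i : Fin 3, ∑ j : Fin 3, ∑ b : Fin 3, G i j b p * pd 0 (G i j b) p := by
    unfold nK2 nG2
    rw [pd_add' _ _ _ _ (by fun_prop) (by fun_prop), pd_cmul _ _ _ _ (by fun_prop),
      pd_cmul _ _ _ _ (by fun_prop), pd_sum3 _ _ _ (fun i => by fun_prop),
      pd_sum3 _ _ _ (fun i => by fun_prop)]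
    have h1 : ∀ i : Fin 3, pd 0 (fun q => ∑ j : Fin 3, (K i j q) ^ 2) p
        = ∑ j : Fin 3, 2 * K i j p * pd 0 (K i j) p := by
      intro i
      rw [pd_sum3 _ _ _ (fun j => by fun_prop)]
      exact Finset.sum_congr rfl (fun j _ => pd_sq _ _ _ (dK i j))
    have h2 : ∀ i : Fin 3, pd 0 (fun q => ∑ j : Fin 3, ∑ b : Fin 3, (G i j b q) ^ 2) p
        = ∑ j : Fin 3, ∑ b : Fin 3, 2 * G i j b p * pd 0 (G i j b) p := by
      intro i
      rw [pd_sum3 _ _ _ (fun j => by fun_prop)]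
      refine Finset.sum_congr rfl (fun j _ => ?_)
      rw [pd_sum3 _ _ _ (fun b => by fun_prop)]
      exact Finset.sum_congr rfl (fun b _ => pd_sq _ _ _ (dG i j b))
    simp only [h1, h2, mul_assoc, ← Finset.mul_sum]
    ring
  have hR : ∀ k : Fin 3, pd k.succ
            (fun q => (∑ i : Fin 3, K i k q * (∑ b : Fin 3, G b i b q))
              - trK K q * (∑ b : Fin 3, G b k b q)
              - (∑ i : Fin 3, ∑ j : Fin 3, G i j k q * K j i q)) p
      = (∑ i : Fin 3, (pd k.succ (K i k) p * (∑ b : Fin 3, G b i b p)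
            + K i k p * ∑ b : Fin 3, pd k.succ (G b i b) p))
        - ((∑ c : Fin 3, pd k.succ (K c c) p) * (∑ b : Fin 3, G b k b p)
            + trK K p * ∑ b : Fin 3, pd k.succ (G b k b) p)
        - ∑ i : Fin 3, ∑ j : Fin 3, (pd k.succ (G i j k) p * K j i p
            + G i j k p * pd k.succ (K j i) p) := by
    intro k
    rw [pd_sub' _ _ _ _ (by fun_prop) (by fun_prop),
      pd_sub' _ _ _ _ (by fun_prop) (by fun_prop), pd_mul' _ _ _ _ dT (dS k), hT, hS,
      pd_sum3 _ _ _ (fun i => by fun_prop), pd_sum3 _ _ _ (fun i => by fun_prop)]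
    congr 1
    · congr 1
      refine Finset.sum_congr rfl (fun i _ => ?_)
      rw [pd_mul' _ _ _ _ (dK i k) (dS i), hS]
    · refine Finset.sum_congr rfl (fun i _ => ?_)
      rw [pd_sum3 _ _ _ (fun i => by fun_prop)]
      exact Finset.sum_congr rfl (fun j _ => pd_mul' _ _ _ _ (dG i j k) (dK j i))
  have sK : ∀ i j, K i j = K j i := fun i j => funext (hKsym i j)
  have aG : ∀ i j b p, G i j b p = - G i b j p := hGanti
  have aD : ∀ (μ : Fin 4) i j b, pd μ (G i j b) p = - pd μ (G i b j) p := by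
    intro μ i j b
    have : G i j b = fun q => (-1) * G i b j q := by
      funext q
      rw [hGanti i j b q]
      ring
    rw [this, pd_cmul _ _ _ _ (dG i b j)]
    ring
  have zG : ∀ i j, G i j j p = 0 := fun i j => by linarith [aG i j j p]
  have zD : ∀ μ i j, pd μ (G i j j) p = 0 := fun μ i j => by linarith [aD μ i j j]
  rw [hL]
  simp only [hR, heqK, heqG, hT, hS]
  simp only [Fin.sum_univ_three, trK, kd, zG, zD]
  simp only [sK 1 0, sK 2 0, sK 2 1, fun i => aG i 1 0 p, fun i => aG i 2 0 p,
    fun i => aG i 2 1 p, fun μ i => aD μ i 1 0, fun μ i => aD μ i 2 0, fun μ i => aD μ i 2 1]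
  simp only [Fin.isValue, Fin.reduceEq, if_true, if_false]
  ring
end
end

section
/- Favourable sign of the boundary terms in the energy estimate (key step in the proof of local well-posedness, Proposition 2.11): let K : {1,2,3}² → ℝ satisfy K_ij = K_ji and let Γ : {1,2,3}³ → ℝ satisfy Γ_ijb = −Γ_ibj for all indices. Then Σ_{i,b} K_i3 Γ_bib − (tr K) Σ_b Γ_b3b − Σ_{i,j} Γ_ij3 K_ji ≤ ½ Σ_{i,j} (K_ij)² + ¼ Σ_{i,j,b} (Γ_ijb)². -/
open scoped BigOperators

noncomputable section

/-- favourable sign of the boundary terms in the energy estimate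
(key step in Proposition 2.11). Index `3` of `{1,2,3}` is `(2 : Fin 3)`. -/
theorem boundary_terms_sign
    (K : Fin 3 → Fin 3 → ℝ) (G : Fin 3 → Fin 3 → Fin 3 → ℝ)
    (hKsym : ∀ i j, K i j = K j i)
    (hGanti : ∀ i j b, G i j b = - G i b j) :
    (∑ i : Fin 3, ∑ b : Fin 3, K i 2 * G b i b)
      - (∑ i : Fin 3, K i i) * (∑ b : Fin 3, G b 2 b)
      - (∑ i : Fin 3, ∑ j : Fin 3, G i j 2 * K j i)
    ≤ (1 / 2) * (∑ i : Fin 3, ∑ j : Fin 3, (K i j) ^ 2)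
      + (1 / 4) * (∑ i : Fin 3, ∑ j : Fin 3, ∑ b : Fin 3, (G i j b) ^ 2) := by
  have d : ∀ i j, G i j j = 0 := fun i j => by linarith [hGanti i j j]
  have h10 := hKsym 1 0
  have h20 := hKsym 2 0
  have h21 := hKsym 2 1
  have a0 := fun i => hGanti i 1 0
  have a1 := fun i => hGanti i 2 0
  have a2 := fun i => hGanti i 2 1
  simp only [Fin.sum_univ_three, d, h10, h20, h21, a0, a1, a2]
  nlinarith [sq_nonneg (K 0 2 - G 1 0 1), sq_nonneg (K 1 2 + G 0 0 1),
    sq_nonneg (K 0 0 - G 1 1 2), sq_nonneg (K 1 1 - G 0 0 2),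
    sq_nonneg (K 0 1 + G 1 0 2), sq_nonneg (K 0 1 + G 0 1 2),
    sq_nonneg (K 0 2), sq_nonneg (K 1 2), sq_nonneg (K 2 2),
    sq_nonneg (G 2 0 1), sq_nonneg (G 2 0 2), sq_nonneg (G 2 1 2)]
end
end

section
/- Three-dimensional cyclic curvature identity (first identity of Lemma 4.3, algebraic form): let T : {1,2,3}⁴ → ℝ satisfy T_aijb = −T_iajb and T_aijb = −T_aibj for all indices, and define t_bi := Σ_a T_abia. Then for all a, b, i, j ∈ {1,2,3}: T_abij + T_biaj + T_iabj = (t_ia − t_ai) δ_bj + (t_bi − t_ib) δ_aj + (t_ab − t_ba) δ_ij. -/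
open scoped BigOperators

noncomputable section

/-- first identity of Lemma 4.3, algebraic form: the
three-dimensional cyclic curvature identity. Here `t b i = Σ_a T a b i a`. -/
theorem cyclic_curvature_identity
    (T : Fin 3 → Fin 3 → Fin 3 → Fin 3 → ℝ)
    (h1 : ∀ a i j b, T a i j b = - T i a j b)
    (h2 : ∀ a i j b, T a i j b = - T a i b j) :
    ∀ a b i j : Fin 3,
      T a b i j + T b i a j + T i a b j
        = ((∑ c : Fin 3, T c i a c) - (∑ c : Fin 3, T c a i c)) * kd b j
          + ((∑ c : Fin 3, T c b i c) - (∑ c : Fin 3, T c i b c)) * kd a j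
          + ((∑ c : Fin 3, T c a b c) - (∑ c : Fin 3, T c b a c)) * kd i j := by
  have d1 : ∀ a j b, T a a j b = 0 := fun a j b => by linarith [h1 a a j b]
  have d2 : ∀ a i j, T a i j j = 0 := fun a i j => by linarith [h2 a i j j]
  have e1 : ∀ j b, T 1 0 j b = - T 0 1 j b := fun j b => h1 1 0 j b
  have e2 : ∀ j b, T 2 0 j b = - T 0 2 j b := fun j b => h1 2 0 j b
  have e3 : ∀ j b, T 2 1 j b = - T 1 2 j b := fun j b => h1 2 1 j b
  have f1 : ∀ a i, T a i 1 0 = - T a i 0 1 := fun a i => h2 a i 1 0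
  have f2 : ∀ a i, T a i 2 0 = - T a i 0 2 := fun a i => h2 a i 2 0
  have f3 : ∀ a i, T a i 2 1 = - T a i 1 2 := fun a i => h2 a i 2 1
  clear h1 h2
  intro a b i j
  fin_cases a <;> fin_cases b <;> fin_cases i <;> fin_cases j <;>
    simp [Fin.sum_univ_three, kd, d1, d2, e1, e2, e3, f1, f2, f3] <;> ring
end
end

section
/- Cyclic curvature identity involving the time direction (third identity of Lemma 4.3, frame form): assume K_ij = K_ji and Γ_ijb = −Γ_ibj identically on ℝ⁴, and that (E-Γ) holds at every point of ℝ⁴. Then for all b, i, j ∈ {1,2,3}: ( ∂_t Γ_bij + Σ_c K_bc Γ_cij ) − ( ∂_t Γ_ibj + Σ_c K_ic Γ_cbj ) + D̃_b K_ij − D̃_i K_bj = −δ_ij R̂_b0 + δ_bj R̂_i0 at every point of ℝ⁴. -/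
open scoped BigOperators

noncomputable section

/-- third identity of Lemma 4.3, frame form: cyclic curvature
identity involving the time direction. -/
theorem cyclic_identity_time
    (f K : Fin 3 → Fin 3 → Pt → ℝ) (G : Fin 3 → Fin 3 → Fin 3 → Pt → ℝ)
    (hf : ∀ i j, ContDiff ℝ (⊤ : ℕ∞) (f i j))
    (hK : ∀ i j, ContDiff ℝ (⊤ : ℕ∞) (K i j)) (hG : ∀ i j b, ContDiff ℝ (⊤ : ℕ∞) (G i j b))
    (hKsym : ∀ (i j : Fin 3) (p : Pt), K i j p = K j i p)
    (hGanti : ∀ (i j b : Fin 3) (p : Pt), G i j b p = - G i b j p)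
    (hEG : ∀ (i j b : Fin 3) (p : Pt), EG f K G i j b p) :
    ∀ (b i j : Fin 3) (p : Pt),
      (pd 0 (G b i j) p + (∑ c : Fin 3, K b c p * G c i j p))
        - (pd 0 (G i b j) p + (∑ c : Fin 3, K i c p * G c b j p))
        + DtK f K G b i j p - DtK f K G i b j p
      = - kd i j * Rb0 f K G b p + kd b j * Rb0 f K G i p := by
  intro b i j p
  have hs : ∀ i j, K i j = K j i := fun i j => funext (hKsym i j)
  have hR : ∀ a : Fin 3, Rb0 f K G a p = (∑ c : Fin 3, fr f c (K c a) p)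
      - (∑ c : Fin 3, ∑ l : Fin 3, G c c l p * K l a p)
      - (∑ c : Fin 3, ∑ l : Fin 3, G c a l p * K c l p) - fr f a (trK K) p := by
    intro a
    have h1 : ∀ c, DtK f K G c a c p = fr f c (K c a) p
        - (∑ l : Fin 3, G c c l p * K l a p) - (∑ l : Fin 3, G c a l p * K c l p) := by
      intro c
      have e2 : ∀ l, K l c p = K c l p := fun l => hKsym l c p
      have e3 : ∀ l, K a l p = K l a p := fun l => hKsym a l p
      simp only [DtK, hs a c, e2, e3]
      ring
    simp only [Rb0, h1, Finset.sum_sub_distrib]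
  have hE : ∀ i j b, pd 0 (G i j b) p + (∑ c : Fin 3, K i c p * G c j b p)
      = DtK f K G j b i p - DtK f K G b j i p
        + kd i b * Rb0 f K G j p - kd i j * Rb0 f K G b p := by
    intro i j b
    have h := hEG i j b p
    unfold EG at h
    rw [h, hR, hR]
    simp only [DtK]
    ring
  have hD : ∀ a b c, DtK f K G a b c p = DtK f K G a c b p := by
    intro a b c
    have e2 : ∀ l, K l c p = K c l p := fun l => hKsym l c p
    have e3 : ∀ l, K b l p = K l b p := fun l => hKsym b l p
    simp only [DtK, hs b c, e2, e3]
    ring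
  have hk : kd b i = kd i b := by simp only [kd, eq_comm]
  rw [hE, hE, hD i j b, hD b j i, hD j i b, hk]
  ring
end
end

section
/- Homogeneous boundary conditions for the modified Ricci components (Lemma 4.5, frame form): let p ∈ ℝ⁴. Assume K_ij = K_ji and Γ_ijb = −Γ_ibj identically on ℝ⁴, and that (E-Γ) holds at p. Suppose that at p one has K_A3 = 0 and Γ_A3B = 0 for all A, B ∈ {1,2}, together with the tangential-derivative conditions e_0 K_A3 = 0, e_0 Γ_A3B = 0 and e_C Γ_A3B = 0 for all A, B, C ∈ {1,2}. Then at p: (a) R̂_30 = 0, i.e. Σ_i [ e_i K_3i − Σ_l Γ_i3l K_li − Σ_l Γ_iil K_3l ] − e_3 (tr K) = 0; and (b) e_0 K_B3 + (tr K) K_B3 + r̂_B3 = 0 for each B ∈ {1,2}. -/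
open scoped BigOperators

noncomputable section

/-- Lemma 4.5, frame form: homogeneous boundary conditions for the
modified Ricci components. Indices `1,2` of `{1,2,3}` are `(0 : Fin 3)`,
`(1 : Fin 3)`; index `3` is `(2 : Fin 3)`; indices ranging over `{1,2}` are encoded
by `Fin 2` via `Fin.castSucc`. -/
theorem Ricci_boundary_conditions
    (f K : Fin 3 → Fin 3 → Pt → ℝ) (G : Fin 3 → Fin 3 → Fin 3 → Pt → ℝ)
    (hf : ∀ i j, ContDiff ℝ (⊤ : ℕ∞) (f i j))
    (hK : ∀ i j, ContDiff ℝ (⊤ : ℕ∞) (K i j)) (hG : ∀ i j b, ContDiff ℝ (⊤ : ℕ∞) (G i j b))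
    (p : Pt)
    (hKsym : ∀ (i j : Fin 3) (q : Pt), K i j q = K j i q)
    (hGanti : ∀ (i j b : Fin 3) (q : Pt), G i j b q = - G i b j q)
    (hEG : ∀ i j b : Fin 3, EG f K G i j b p)
    (hbK : ∀ A : Fin 2, K A.castSucc 2 p = 0)
    (hbG : ∀ A B : Fin 2, G A.castSucc 2 B.castSucc p = 0)
    (htK0 : ∀ A : Fin 2, pd 0 (K A.castSucc 2) p = 0)
    (htG0 : ∀ A B : Fin 2, pd 0 (G A.castSucc 2 B.castSucc) p = 0)
    (htG : ∀ A B C : Fin 2, fr f C.castSucc (G A.castSucc 2 B.castSucc) p = 0) :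
    ((∑ i : Fin 3, (fr f i (K 2 i) p
        - (∑ l : Fin 3, G i 2 l p * K l i p)
        - (∑ l : Fin 3, G i i l p * K 2 l p)))
      - fr f 2 (trK K) p = 0)
    ∧ (∀ B : Fin 2,
        pd 0 (K B.castSucc 2) p + trK K p * K B.castSucc 2 p
          + rhat f G B.castSucc 2 p = 0) := by
  have Ks : ∀ i j, K i j = K j i := fun i j => funext (hKsym i j)
  have hd : ∀ i, DifferentiableAt ℝ (K i i) p := fun i =>
    ((hK i i).differentiable (by simp)).differentiableAt
  have htr : fr f 2 (trK K) p = fr f 2 (K 0 0) p + fr f 2 (K 1 1) p + fr f 2 (K 2 2) p := by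
    have e : trK K = K 0 0 + K 1 1 + K 2 2 := by
      funext q
      simp [trK, Fin.sum_univ_three]
    have hp : ∀ μ, pd μ (trK K) p = pd μ (K 0 0) p + pd μ (K 1 1) p + pd μ (K 2 2) p := by
      intro μ
      rw [e]
      unfold pd
      rw [fderiv_add ((hd 0).add (hd 1)) (hd 2), fderiv_add (hd 0) (hd 1)]
      simp
    simp only [fr, hp, ← Finset.sum_add_distrib]
    exact Finset.sum_congr rfl fun _ _ => by ring
  have hdiag : ∀ i j q, G i j j q = 0 := fun i j q => by
    have := hGanti i j j q
    linarith
  have hfrdiag : ∀ a i j, fr f a (G i j j) p = 0 := fun a i j => by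
    have e : G i j j = fun _ => 0 := funext (hdiag i j)
    rw [e]
    simp [fr, pd]
  have k0 : K 0 2 p = 0 := hbK 0
  have k1 : K 1 2 p = 0 := hbK 1
  have g00 : G 0 2 0 p = 0 := hbG 0 0
  have g01 : G 0 2 1 p = 0 := hbG 0 1
  have g10 : G 1 2 0 p = 0 := hbG 1 0
  have g11 : G 1 2 1 p = 0 := hbG 1 1
  have a00 : G 0 0 2 p = 0 := by rw [hGanti, g00, neg_zero]
  have a01 : G 0 1 2 p = 0 := by rw [hGanti, g01, neg_zero]
  have a10 : G 1 0 2 p = 0 := by rw [hGanti, g10, neg_zero]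
  have a11 : G 1 1 2 p = 0 := by rw [hGanti, g11, neg_zero]
  constructor
  · have h0 := hEG 0 2 0
    have h1 := hEG 1 2 1
    have t0 : pd 0 (G 0 2 0) p = 0 := htG0 0 0
    have t1 : pd 0 (G 1 2 1) p = 0 := htG0 1 1
    simp only [EG, Fin.sum_univ_three, kd, t0, t1, htr, Ks 2 0, Ks 2 1, Ks 1 0, k0, k1,
      g00, g01, g10, g11, a00, a01, a10, a11, hdiag] at h0 h1 ⊢
    simp at h0 h1 ⊢
    rw [hGanti 2 1 0 p] at h1
    linarith
  · intro B
    have d : ∀ a b c : Fin 2, fr f a.castSucc (G b.castSucc 2 c.castSucc) p = 0 :=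
      fun a b c => htG b c a
    rw [htK0, hbK]
    have d0 := d 0
    have d1 := d 1
    simp only [Fin.forall_fin_two] at d0 d1
    simp at d0 d1
    fin_cases B <;>
    · simp only [rhat, Rhat, Fin.sum_univ_three]
      simp [hfrdiag, hdiag, d0, d1, g00, g01, g10, g11, a00, a01, a10, a11]
      try ring
end
end
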